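/- arXiv:1106.5573 — 2 statements merged into one kernel-verified Lean document; each statement's English description precedes it below -/
import Mathlib

section
/- Let b ≥ 3, let Λ ⊆ ℝ^b be a countable additive subgroup, and let W ⊆ ℝ^b be a positive three-dimensional subspace with W^⊥ ∩ Λ = {0}. Then the set of points [z] of the twistor line T_W for which there exists some α ∈ Λ \ {0} with ⟨z, α⟩ = 0 is countable. -/
noncomputable section

open scoped BigOperators

def eps {b : ℕ} (i : Fin b) : ℝ := if (i : ℕ) < 3 then 1 else -1

def bR {b : ℕ} (v w : Fin b → ℝ) : ℝ := ∑ i, eps i * v i * w i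

def qR {b : ℕ} (v : Fin b → ℝ) : ℝ := bR v v

def bC {b : ℕ} (z w : Fin b → ℂ) : ℂ := ∑ i, (eps i : ℂ) * z i * w i

def qC {b : ℕ} (z : Fin b → ℂ) : ℂ := bC z z

def conjVec {b : ℕ} (z : Fin b → ℂ) : Fin b → ℂ := fun i => (starRingEnd ℂ) (z i)

def rePart {b : ℕ} (z : Fin b → ℂ) : Fin b → ℝ := fun i => (z i).re
def imPart {b : ℕ} (z : Fin b → ℂ) : Fin b → ℝ := fun i => (z i).im

def cplx {b : ℕ} (v : Fin b → ℝ) : Fin b → ℂ := fun i => (v i : ℂ)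

def isPeriodVec {b : ℕ} (z : Fin b → ℂ) : Prop :=
  qC z = 0 ∧ 0 < (bC z (conjVec z)).re

instance projectivizationTopology (K V : Type*) [DivisionRing K] [AddCommGroup V] [Module K V]
    [TopologicalSpace V] : TopologicalSpace (Projectivization K V) :=
  inferInstanceAs (TopologicalSpace (Quotient (projectivizationSetoid K V)))

def periodDomain (b : ℕ) : Set (Projectivization ℂ (Fin b → ℂ)) :=
  {x | ∃ (z : Fin b → ℂ) (hz : z ≠ 0), Projectivization.mk ℂ z hz = x ∧ isPeriodVec z}

def Pspan {b : ℕ} (z : Fin b → ℂ) : Submodule ℝ (Fin b → ℝ) :=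
  Submodule.span ℝ {rePart z, imPart z}

def PosDefOn {b : ℕ} (W : Submodule ℝ (Fin b → ℝ)) : Prop :=
  ∀ v ∈ W, v ≠ 0 → 0 < qR v

def twistorLine {b : ℕ} (W : Submodule ℝ (Fin b → ℝ)) :
    Set (Projectivization ℂ (Fin b → ℂ)) :=
  {x | ∃ (z : Fin b → ℂ) (hz : z ≠ 0), Projectivization.mk ℂ z hz = x ∧ isPeriodVec z ∧
    rePart z ∈ W ∧ imPart z ∈ W}

/-- `W^⊥ ∩ Λ = {0}`: the twistor line / three-space `W` is generic w.r.t. `Λ`. -/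
def IsGenericW {b : ℕ} (Λ : AddSubgroup (Fin b → ℝ)) (W : Submodule ℝ (Fin b → ℝ)) : Prop :=
  ∀ α ∈ Λ, (∀ w ∈ W, bR α w = 0) → α = 0

def bRlin {b : ℕ} (p : Fin b → ℝ) : (Fin b → ℝ) →ₗ[ℝ] ℝ where
  toFun v := bR v p
  map_add' x y := by
    unfold bR
    rw [← Finset.sum_add_distrib]
    exact Finset.sum_congr rfl fun i _ => by simp [Pi.add_apply]; ring
  map_smul' c x := by
    show bR (c • x) p = (RingHom.id ℝ) c • bR x p
    unfold bR
    rw [RingHom.id_apply, smul_eq_mul, Finset.mul_sum]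
    exact Finset.sum_congr rfl fun i _ => by simp [Pi.smul_apply]; ring

def perpSubmodule {b : ℕ} (P : Submodule ℝ (Fin b → ℝ)) : Submodule ℝ (Fin b → ℝ) :=
  ⨅ p ∈ P, LinearMap.ker (bRlin p)

/-!
The real and imaginary parts of a period vector `z` are orthogonal and have the same positive
norm, so they span a real plane. Conversely a real plane `P` determines `[z]` up to complex
conjugation: a vector with real and imaginary part in `P` is `a z + c (conj z)`, its square is
`2 a c ⟨z, conj z⟩` if `z` is a period vector, and this vanishes only if `a = 0` or `c = 0`. The
points of `T_W` orthogonal to `α` have their real and imaginary parts in `W ∩ α^⊥`, which is at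
most a plane once `α` is not orthogonal to `W`. Hence each `α` accounts for at most two points.
-/

section RealAndComplexForm

variable {b : ℕ}

lemma bR_comm (v w : Fin b → ℝ) : bR v w = bR w v :=
  Finset.sum_congr rfl fun i _ => by ring

lemma bRlin_apply (p v : Fin b → ℝ) : bRlin p v = bR v p := rfl

lemma linearIndependent_pair_of_bR_eq_zero {u v : Fin b → ℝ} (huv : bR u v = 0)
    (hu : qR u ≠ 0) (hv : qR v ≠ 0) : LinearIndependent ℝ ![u, v] := by
  refine LinearIndependent.pair_iff.2 fun s t hst => ⟨?_, ?_⟩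
  · have h : s * qR u + t * bR v u = 0 := by
      simpa only [map_add, map_smul, map_zero, smul_eq_mul, bRlin_apply, qR]
        using congrArg (bRlin u) hst
    simpa [bR_comm v u, huv, hu] using h
  · have h : s * bR u v + t * qR v = 0 := by
      simpa only [map_add, map_smul, map_zero, smul_eq_mul, bRlin_apply, qR]
        using congrArg (bRlin v) hst
    simpa [huv, hv] using h

lemma re_bC_cplx (z : Fin b → ℂ) (α : Fin b → ℝ) : (bC z (cplx α)).re = bR (rePart z) α := by
  simp [bC, bR, cplx, rePart]

lemma im_bC_cplx (z : Fin b → ℂ) (α : Fin b → ℝ) : (bC z (cplx α)).im = bR (imPart z) α := by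
  simp [bC, bR, cplx, imPart]

lemma re_qC (z : Fin b → ℂ) : (qC z).re = qR (rePart z) - qR (imPart z) := by
  simp [qC, bC, qR, bR, rePart, imPart, Finset.sum_sub_distrib]

lemma im_qC (z : Fin b → ℂ) : (qC z).im = 2 * bR (rePart z) (imPart z) := by
  simp only [qC, bC, bR, rePart, imPart, Complex.im_sum, Finset.mul_sum]
  exact Finset.sum_congr rfl fun i _ => by
    simp only [Complex.mul_im, Complex.mul_re, Complex.ofReal_re, Complex.ofReal_im, zero_mul,
      sub_zero, add_zero]
    ring

lemma re_bC_conjVec (z : Fin b → ℂ) :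
    (bC z (conjVec z)).re = qR (rePart z) + qR (imPart z) := by
  simp [bC, qR, bR, conjVec, rePart, imPart, Finset.sum_add_distrib]

lemma bC_smul_left (c : ℂ) (z w : Fin b → ℂ) : bC (c • z) w = c * bC z w := by
  simp [bC, Finset.mul_sum, mul_assoc, mul_left_comm]

lemma qC_smul_add_smul (a c : ℂ) (z w : Fin b → ℂ) :
    qC (a • z + c • w) = a ^ 2 * qC z + 2 * a * c * bC z w + c ^ 2 * qC w := by
  simp only [qC, bC, Finset.mul_sum, ← Finset.sum_add_distrib, Pi.add_apply, Pi.smul_apply,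
    smul_eq_mul]
  exact Finset.sum_congr rfl fun i _ => by ring

lemma qC_conjVec (z : Fin b → ℂ) : qC (conjVec z) = starRingEnd ℂ (qC z) := by
  simp [qC, bC, conjVec]

lemma conjVec_ne_zero {z : Fin b → ℂ} (hz : z ≠ 0) : conjVec z ≠ 0 :=
  star_ne_zero.2 hz

end RealAndComplexForm

section PeriodPlane

variable {b : ℕ} {z w : Fin b → ℂ}

lemma isPeriodVec.linearIndependent_rePart_imPart (hz : isPeriodVec z) :
    LinearIndependent ℝ ![rePart z, imPart z] := by
  obtain ⟨hq, hpos⟩ := hz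
  have hnorm : qR (rePart z) - qR (imPart z) = 0 := by rw [← re_qC, hq, Complex.zero_re]
  have hortho : 2 * bR (rePart z) (imPart z) = 0 := by rw [← im_qC, hq, Complex.zero_im]
  rw [re_bC_conjVec] at hpos
  have hre : 0 < qR (rePart z) := by linarith
  have him : 0 < qR (imPart z) := by linarith
  exact linearIndependent_pair_of_bR_eq_zero (by linarith) hre.ne' him.ne'

lemma isPeriodVec.finrank_Pspan (hz : isPeriodVec z) : Module.finrank ℝ (Pspan z) = 2 := by
  rw [Pspan, ← Matrix.range_cons_cons_empty _ _ ![],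
    finrank_span_eq_card hz.linearIndependent_rePart_imPart, Fintype.card_fin]

lemma exists_eq_smul_add_smul_conjVec (hre : rePart w ∈ Pspan z) (him : imPart w ∈ Pspan z) :
    ∃ a c : ℂ, w = a • z + c • conjVec z := by
  obtain ⟨p, q, hpq⟩ := Submodule.mem_span_pair.1 hre
  obtain ⟨r, s, hrs⟩ := Submodule.mem_span_pair.1 him
  -- Put `Re z = (z + conj z) / 2` and `Im z = (z - conj z) / (2 * i)` into `w = Re w + i Im w`.
  refine ⟨⟨(p + s) / 2, (r - q) / 2⟩, ⟨(p - s) / 2, (r + q) / 2⟩, funext fun i => ?_⟩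
  have hre_i : p * (z i).re + q * (z i).im = (w i).re := congrFun hpq i
  have him_i : r * (z i).re + s * (z i).im = (w i).im := congrFun hrs i
  apply Complex.ext
  · simp only [← hre_i, Pi.add_apply, Pi.smul_apply, smul_eq_mul, conjVec, Complex.add_re,
      Complex.mul_re, Complex.conj_re, Complex.conj_im, mul_neg, sub_neg_eq_add]
    ring
  · simp only [← him_i, Pi.add_apply, Pi.smul_apply, smul_eq_mul, conjVec, Complex.add_im,
      Complex.mul_im, Complex.conj_re, Complex.conj_im, mul_neg]
    ring

lemma isPeriodVec.exists_eq_smul_or_eq_smul_conjVec (hz : isPeriodVec z) (hw : qC w = 0)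
    (hre : rePart w ∈ Pspan z) (him : imPart w ∈ Pspan z) :
    ∃ c : ℂ, w = c • z ∨ w = c • conjVec z := by
  obtain ⟨a, c, rfl⟩ := exists_eq_smul_add_smul_conjVec hre him
  have hbC : bC z (conjVec z) ≠ 0 := fun h => hz.2.ne' (by rw [h, Complex.zero_re])
  have hac : a = 0 ∨ c = 0 := by
    simpa [qC_smul_add_smul, qC_conjVec, hz.1, hbC] using hw
  rcases hac with rfl | rfl
  · exact ⟨c, Or.inr (by rw [zero_smul, zero_add])⟩
  · exact ⟨a, Or.inl (by rw [zero_smul, add_zero])⟩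

end PeriodPlane

section TwistorLine

variable {b : ℕ} {W : Submodule ℝ (Fin b → ℝ)} {α : Fin b → ℝ}

lemma twistorLine_finite_of_finrank_le_two (hW : Module.finrank ℝ W ≤ 2) :
    (twistorLine W).Finite := by
  rcases (twistorLine W).eq_empty_or_nonempty with hempty | ⟨_, z, hz0, -, hz, hre, him⟩
  · exact hempty ▸ Set.finite_empty
  have hspan : Pspan z = W :=
    Submodule.eq_of_le_of_finrank_le (Submodule.span_le.2 (Set.pair_subset hre him))
      (hW.trans_eq hz.finrank_Pspan.symm)
  refine (Set.toFinite {Projectivization.mk ℂ z hz0,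
    Projectivization.mk ℂ (conjVec z) (conjVec_ne_zero hz0)}).subset ?_
  rintro _ ⟨w, hw0, rfl, hw, hwre, hwim⟩
  rw [← hspan] at hwre hwim
  obtain ⟨c, hc | hc⟩ := hz.exists_eq_smul_or_eq_smul_conjVec hw.1 hwre hwim
  · exact Or.inl ((Projectivization.mk_eq_mk_iff' ..).2 ⟨c, hc.symm⟩)
  · exact Or.inr ((Projectivization.mk_eq_mk_iff' ..).2 ⟨c, hc.symm⟩)

lemma mk_mem_twistorLine_inf_ker_bRlin {z : Fin b → ℂ} {hz : z ≠ 0}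
    (hzW : Projectivization.mk ℂ z hz ∈ twistorLine W) (hzα : bC z (cplx α) = 0) :
    Projectivization.mk ℂ z hz ∈ twistorLine (W ⊓ LinearMap.ker (bRlin α)) := by
  obtain ⟨w, hw0, hwz, hw, hre, him⟩ := hzW
  obtain ⟨c, rfl⟩ := (Projectivization.mk_eq_mk_iff' ..).1 hwz
  have hwα : bC (c • z) (cplx α) = 0 := by rw [bC_smul_left, hzα, mul_zero]
  have hreα : bR (rePart (c • z)) α = 0 := by rw [← re_bC_cplx, hwα, Complex.zero_re]
  have himα : bR (imPart (c • z)) α = 0 := by rw [← im_bC_cplx, hwα, Complex.zero_im]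
  exact ⟨c • z, hw0, hwz, hw, ⟨hre, hreα⟩, ⟨him, himα⟩⟩

lemma finrank_inf_ker_bRlin_lt {x : Fin b → ℝ} (hxW : x ∈ W) (hx : bR α x ≠ 0) :
    Module.finrank ℝ ↥(W ⊓ LinearMap.ker (bRlin α)) < Module.finrank ℝ W :=
  Submodule.finrank_lt_finrank_of_lt <| inf_lt_left.2 fun hle =>
    hx ((bR_comm α x).trans (hle hxW))

end TwistorLine

theorem stmt8_general {b : ℕ} {S : Set (Fin b → ℝ)} (hS : S.Countable)
    {W : Submodule ℝ (Fin b → ℝ)} (hdim : Module.finrank ℝ W ≤ 3)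
    (hgen : ∀ α ∈ S, (∀ w ∈ W, bR α w = 0) → α = 0) :
    Set.Countable {x | x ∈ twistorLine W ∧ ∃ (z : Fin b → ℂ) (h : z ≠ 0),
      Projectivization.mk ℂ z h = x ∧ ∃ α ∈ S, α ≠ 0 ∧ bC z (cplx α) = 0} := by
  have hfinite : ∀ α ∈ S \ {0}, (twistorLine (W ⊓ LinearMap.ker (bRlin α))).Finite := by
    rintro α ⟨hα, hα0⟩
    obtain ⟨w, hw, hαw⟩ : ∃ w ∈ W, bR α w ≠ 0 := by
      by_contra! hortho
      exact hα0 (hgen α hα hortho)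
    exact twistorLine_finite_of_finrank_le_two
      (Nat.le_of_lt_succ ((finrank_inf_ker_bRlin_lt hw hαw).trans_le hdim))
  refine ((hS.mono Set.sdiff_subset).biUnion fun α hα => (hfinite α hα).countable).mono ?_
  rintro _ ⟨hxW, z, hz, rfl, α, hα, hα0, hzα⟩
  exact Set.mem_biUnion ⟨hα, hα0⟩ (mk_mem_twistorLine_inf_ker_bRlin hxW hzα)

/-- on a generic twistor line, only countably many points are orthogonal
to some nonzero element of `Λ`. -/
theorem stmt8 (b : ℕ) (hb : 3 ≤ b) (Λ : AddSubgroup (Fin b → ℝ))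
    (hΛ : (Λ : Set (Fin b → ℝ)).Countable)
    (W : Submodule ℝ (Fin b → ℝ)) (hdim : Module.finrank ℝ ↥W = 3) (hpos : PosDefOn W)
    (hgen : IsGenericW Λ W) :
    Set.Countable {x | x ∈ twistorLine W ∧ ∃ (z : Fin b → ℂ) (h : z ≠ 0),
      Projectivization.mk ℂ z h = x ∧ ∃ α ∈ Λ, α ≠ 0 ∧ bC z (cplx α) = 0} :=
  stmt8_general hΛ hdim.le hgen
end
end

section
/- Let b ≥ 3, let Λ ⊆ ℝ^b be a countable additive subgroup, and let B be a connected open subset of the period domain D (in the subspace topology). Then any two points [x], [y] ∈ B are strongly equivalent as points of B: there exist k ≥ 1, generic positive three-dimensional subspaces W₁, …, W_k ⊆ ℝ^b, and points [x] = [x₁], [x₂], …, [x_{k+1}] = [y] in B such that for each i = 1, …, k the points [x_i] and [x_{i+1}] lie in the same connected component of T_{W_i} ∩ B. -/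
noncomputable section

open scoped BigOperators

/-!
A period point is an oriented positive plane, given up to Gram–Schmidt by an ordered basis
`(u, v)`, and it lies on `T_W` when `u, v ∈ W`. Vectors orthogonal to no nonzero element of the
countable set `Λ` are dense, and any `W` containing such a vector is generic. Near a pair
`(u, v)` one can therefore choose such vectors `w` close to `v` and `t` close to `u` for which
`(w, u, v)` and `(t, u, v)` span positive three-spaces; this persists when `(u, v)` is moved a
little to `(u', v')`. The segments `(u, v) → (u, w) → (u, v') → (t, v') → (u', v')` then join the
two points inside `B` along generic twistor lines. Hence strong equivalence has open classes, and
a connected `B` has only one.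
-/

open Topology

lemma exists_relSeries_of_transGen {α : Type*} {r : α → α → Prop} {x y : α}
    (h : Relation.TransGen r x y) :
    ∃ s : RelSeries {p : α × α | r p.1 p.2}, 1 ≤ s.length ∧ s.head = x ∧ s.last = y := by
  induction h with
  | @single y hxy =>
    let s := RelSeries.singleton {p : α × α | r p.1 p.2} x
    exact ⟨s.snoc y hxy, Nat.le_add_left _ _, s.head_snoc _ _, s.last_snoc _ _⟩
  | @tail y z _ hyz ih =>
    obtain ⟨s, -, hhead, rfl⟩ := ih
    exact ⟨s.snoc z hyz, Nat.le_add_left _ _, (s.head_snoc _ _).trans hhead, s.last_snoc _ _⟩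

section ProjectivizationTopology

variable {K V : Type*} [DivisionRing K] [AddCommGroup V] [Module K V] [TopologicalSpace V]

lemma continuous_projectivizationMk :
    Continuous fun z : {z : V // z ≠ 0} => Projectivization.mk K z.1 z.2 :=
  continuous_quotient_mk' (s := projectivizationSetoid K V)

lemma isOpenMap_projectivizationMk [ContinuousConstSMul K V] :
    IsOpenMap fun z : {z : V // z ≠ 0} => Projectivization.mk K z.1 z.2 := by
  intro N hN
  have hq : IsQuotientMap fun z : {z : V // z ≠ 0} => Projectivization.mk K z.1 z.2 :=
    isQuotientMap_quotient_mk' (s := projectivizationSetoid K V)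
  have hpre : (fun z : {z : V // z ≠ 0} => Projectivization.mk K z.1 z.2) ⁻¹'
      ((fun z : {z : V // z ≠ 0} => Projectivization.mk K z.1 z.2) '' N) =
      ⋃ a : Kˣ, {z | (⟨a • z.1, (smul_ne_zero_iff_ne a).2 z.2⟩ : {z : V // z ≠ 0}) ∈ N} := by
    ext z
    simp only [Set.mem_preimage, Set.mem_image, Set.mem_iUnion, Set.mem_ofPred_eq,
      Projectivization.mk_eq_mk_iff]
    constructor
    · rintro ⟨w, hw, a, ha⟩
      exact ⟨a, by simpa only [ha] using hw⟩
    · rintro ⟨a, ha⟩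
      exact ⟨_, ha, a, rfl⟩
  rw [← hq.isOpen_preimage, hpre]
  refine isOpen_iUnion fun a => hN.preimage (Continuous.subtype_mk ?_ _)
  exact continuous_subtype_val.const_smul (a : K)

end ProjectivizationTopology

section PositiveFamily

variable {E ι κ : Type*} [AddCommGroup E] [Module ℝ E] [Fintype ι] [Fintype κ]
  {Q : LinearMap.BilinForm ℝ E}

/-- A finite family is positive for `Q` if it is a basis of a subspace on which `Q` is positive
definite. Phrased through coefficients, this is visibly an open condition on the family. -/
def IsPositiveFamily (Q : LinearMap.BilinForm ℝ E) (f : ι → E) : Prop :=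
  ∀ c : ι → ℝ, c ≠ 0 → 0 < Q (∑ i, c i • f i) (∑ i, c i • f i)

namespace IsPositiveFamily

lemma linearIndependent {f : ι → E} (hf : IsPositiveFamily Q f) : LinearIndependent ℝ f := by
  rw [Fintype.linearIndependent_iff]
  intro c hc
  by_contra! hne
  have hpos := hf c (Function.ne_iff.2 hne)
  simp only [hc, map_zero, lt_irrefl] at hpos

lemma pos_of_mem_span {f : ι → E} (hf : IsPositiveFamily Q f) {v : E}
    (hv : v ∈ Submodule.span ℝ (Set.range f)) (hv0 : v ≠ 0) : 0 < Q v v := by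
  obtain ⟨c, rfl⟩ := (Submodule.mem_span_range_iff_exists_fun ℝ).1 hv
  refine hf c ?_
  rintro rfl
  simp at hv0

lemma nonneg_of_mem_span {f : ι → E} (hf : IsPositiveFamily Q f) {v : E}
    (hv : v ∈ Submodule.span ℝ (Set.range f)) : 0 ≤ Q v v := by
  rcases eq_or_ne v 0 with rfl | hv0
  · simp
  · exact (hf.pos_of_mem_span hv hv0).le

lemma apply_self_pos {f : ι → E} (hf : IsPositiveFamily Q f) (i : ι) : 0 < Q (f i) (f i) :=
  hf.pos_of_mem_span (Submodule.subset_span ⟨i, rfl⟩) (hf.linearIndependent.ne_zero i)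

lemma exists_pos_orthogonal {g : κ → E} (hg : IsPositiveFamily Q g) (f : ι → E)
    (hcard : Fintype.card ι < Fintype.card κ) : ∃ c : E, 0 < Q c c ∧ ∀ i, Q (f i) c = 0 := by
  let L : (κ → ℝ) →ₗ[ℝ] (ι → ℝ) :=
    (LinearMap.pi fun i => Q (f i)) ∘ₗ Fintype.linearCombination ℝ g
  have hker : LinearMap.ker L ≠ ⊥ := LinearMap.ker_ne_bot_of_finrank_lt (by simpa using hcard)
  obtain ⟨c, hc, hc0⟩ := Submodule.exists_mem_ne_zero_of_ne_bot hker
  exact ⟨∑ i, c i • g i, hg c hc0, fun i => congrFun hc i⟩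

lemma vecCons_add_smul {n : ℕ} {f : Fin n → E} (hf : IsPositiveFamily Q f) (hQ : Q.IsSymm)
    {e c : E} (he : e ∈ Submodule.span ℝ (Set.range f)) (hc : 0 < Q c c)
    (hfc : ∀ i, Q (f i) c = 0) {t : ℝ} (ht : t ≠ 0) :
    IsPositiveFamily Q (Matrix.vecCons (e + t • c) f) := by
  intro x hx
  set z := x 0
  set s := ∑ i : Fin n, x i.succ • f i
  set v := z • e + s
  have hvf : v ∈ Submodule.span ℝ (Set.range f) :=
    add_mem (Submodule.smul_mem _ _ he) (Submodule.sum_mem _ fun i _ =>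
      Submodule.smul_mem _ _ (Submodule.subset_span ⟨i, rfl⟩))
  have hvc : Q v c = 0 := by
    have hle : Submodule.span ℝ (Set.range f) ≤ LinearMap.ker (Q.flip c) :=
      Submodule.span_le.2 (Set.range_subset_iff.2 hfc)
    exact hle hvf
  have hsum : ∑ i, x i • Matrix.vecCons (e + t • c) f i = v + (z * t) • c := by
    simp only [Fin.sum_univ_succ, Matrix.cons_val_zero, Matrix.cons_val_succ]
    module
  have hsplit : Q (v + (z * t) • c) (v + (z * t) • c) = Q v v + (z * t) ^ 2 * Q c c := by
    simp only [map_add, map_smul, LinearMap.add_apply, LinearMap.smul_apply, smul_eq_mul,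
      hQ.eq c v ▸ hvc, hvc]
    ring
  rw [hsum, hsplit]
  rcases eq_or_ne z 0 with hz | hz
  · have htail : (fun i : Fin n => x i.succ) ≠ 0 := fun h0 =>
      hx (funext (Fin.cases hz (congrFun h0)))
    have hvs : v = s := by simp [v, hz]
    rw [hvs, hz, zero_mul, zero_pow two_ne_zero, zero_mul, add_zero]
    exact hf _ htail
  · have := hf.nonneg_of_mem_span hvf
    positivity

end IsPositiveFamily

lemma isPositiveFamily_iff_forall_mem_sphere {f : ι → E} :
    IsPositiveFamily Q f ↔
      ∀ c ∈ Metric.sphere (0 : ι → ℝ) 1, 0 < Q (∑ i, c i • f i) (∑ i, c i • f i) := by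
  constructor
  · exact fun hf c hc => hf c (ne_zero_of_mem_unit_sphere ⟨c, hc⟩)
  · intro h c hc
    have hscale := h (‖c‖⁻¹ • c) (by simp [norm_smul, hc])
    have hsum : ∑ i, (‖c‖⁻¹ • c) i • f i = ‖c‖⁻¹ • ∑ i, c i • f i := by
      simp only [Pi.smul_apply, smul_assoc, Finset.smul_sum]
    have hinv : 0 < ‖c‖⁻¹ := by positivity
    simpa only [hsum, map_smul, LinearMap.smul_apply, smul_pos_iff_of_pos_left hinv] using hscale

variable [TopologicalSpace E] [ContinuousSMul ℝ E]

lemma isOpen_setOf_isPositiveFamily [ContinuousAdd E]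
    (hQ : Continuous fun p : E × E => Q p.1 p.2) :
    IsOpen {f : ι → E | IsPositiveFamily Q f} := by
  simp only [isPositiveFamily_iff_forall_mem_sphere]
  refine isOpen_iff_eventually.2 fun f hf =>
    (isCompact_sphere _ _).eventually_forall_of_forall_eventually fun c hc => ?_
  have hsum : Continuous fun p : (ι → E) × (ι → ℝ) => ∑ i, p.2 i • p.1 i := by fun_prop
  exact (hQ.comp (hsum.prodMk hsum)).continuousAt.eventually (lt_mem_nhds (hf c hc))

lemma IsPositiveFamily.mem_closure_setOf_vecCons [ContinuousAdd E] {n : ℕ} {f : Fin n → E}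
    (hf : IsPositiveFamily Q f) (hQ : Q.IsSymm) {e c : E}
    (he : e ∈ Submodule.span ℝ (Set.range f)) (hc : 0 < Q c c) (hfc : ∀ i, Q (f i) c = 0) :
    e ∈ closure {w | IsPositiveFamily Q (Matrix.vecCons w f)} := by
  have hlim : Filter.Tendsto (fun t : ℝ => e + t • c) (𝓝[≠] 0) (𝓝 e) := by
    have hcont : Continuous fun t : ℝ => e + t • c := by fun_prop
    simpa using (hcont.tendsto 0).mono_left nhdsWithin_le_nhds
  refine mem_closure_of_tendsto hlim ?_
  filter_upwards [self_mem_nhdsWithin] with t ht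
  exact hf.vecCons_add_smul hQ he hc hfc ht

lemma dense_setOf_forall_apply_eq_zero_imp [IsTopologicalAddGroup E] [BaireSpace E]
    (hQ : ∀ α, Continuous (Q α)) (hsep : Q.SeparatingLeft) {S : Set E} (hS : S.Countable) :
    Dense {u | ∀ α ∈ S, Q α u = 0 → α = 0} := by
  have hdense : Dense (⋂ α ∈ S \ {0}, {u | Q α u ≠ 0}) := by
    refine dense_biInter_of_isOpen (fun α _ => isOpen_ne_fun (hQ α) continuous_const)
      (hS.mono Set.sdiff_subset) fun α hα => ?_
    change Dense ((LinearMap.ker (Q α) : Set E)ᶜ)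
    rw [← interior_eq_empty_iff_dense_compl, ← Set.not_nonempty_iff_eq_empty]
    intro hint
    have htop := Submodule.eq_top_of_nonempty_interior' _ hint
    exact hα.2 (hsep α fun v => LinearMap.mem_ker.1 (htop ▸ Submodule.mem_top))
  refine hdense.mono fun u hu α hα hαu => ?_
  by_contra hα0
  exact Set.mem_iInter₂.1 hu α ⟨hα, hα0⟩ hαu

end PositiveFamily

section ConformalPair

variable {E : Type*} [AddCommGroup E] [Module ℝ E] {Q : LinearMap.BilinForm ℝ E}

/-- Two orthogonal vectors of the same positive square: these are the real and imaginary parts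
of the vectors `z` with `q(z) = 0` and `⟨z, z̄⟩ > 0`. -/
structure IsConformalPair (Q : LinearMap.BilinForm ℝ E) (u v : E) : Prop where
  apply_self_eq : Q u u = Q v v
  apply_eq_zero : Q u v = 0
  apply_self_pos : 0 < Q u u

/-- The Gram determinant of two vectors. -/
def gramDet (Q : LinearMap.BilinForm ℝ E) (u v : E) : ℝ := Q u u * Q v v - Q u v ^ 2

/-- The Gram–Schmidt process for a positive pair, normalized so that both resulting vectors have
square `Q u u * gramDet Q u v` and no division is needed. -/
def conformalFrame (Q : LinearMap.BilinForm ℝ E) (p : E × E) : E × E :=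
  (√(gramDet Q p.1 p.2) • p.1, Q p.1 p.1 • p.2 - Q p.1 p.2 • p.1)

lemma IsConformalPair.isPositiveFamily {u v : E} (h : IsConformalPair Q u v) (hQ : Q.IsSymm) :
    IsPositiveFamily Q ![u, v] := by
  intro c hc
  have hsq : Q (∑ i, c i • ![u, v] i) (∑ i, c i • ![u, v] i) = (c 0 ^ 2 + c 1 ^ 2) * Q u u := by
    simp only [Fin.sum_univ_two, Matrix.cons_val_zero, Matrix.cons_val_one, map_add, map_smul,
      LinearMap.add_apply, LinearMap.smul_apply, smul_eq_mul, ← h.apply_self_eq,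
      h.apply_eq_zero, hQ.eq v u ▸ h.apply_eq_zero]
    ring
  rw [hsq]
  have hne : c 0 ≠ 0 ∨ c 1 ≠ 0 := Fin.exists_fin_two.1 (Function.ne_iff.1 hc)
  refine mul_pos ?_ h.apply_self_pos
  rcases hne with h0 | h1 <;> positivity

lemma IsPositiveFamily.gramDet_pos {u v : E} (h : IsPositiveFamily Q ![u, v]) (hQ : Q.IsSymm) :
    0 < gramDet Q u v := by
  have hu : 0 < Q u u := h.apply_self_pos 0
  have hw := h ![-Q u v, Q u u] fun h0 => hu.ne' (congrFun h0 1)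
  have hsq : Q (-Q u v • u + Q u u • v) (-Q u v • u + Q u u • v) = Q u u * gramDet Q u v := by
    simp only [map_add, map_smul, LinearMap.add_apply, LinearMap.smul_apply, smul_eq_mul,
      hQ.eq v u, gramDet]
    ring
  simp only [Fin.sum_univ_two, Matrix.cons_val_zero, Matrix.cons_val_one, hsq] at hw
  exact (mul_pos_iff_of_pos_left hu).1 hw

lemma IsPositiveFamily.isConformalPair_conformalFrame {p : E × E}
    (h : IsPositiveFamily Q ![p.1, p.2]) (hQ : Q.IsSymm) :
    IsConformalPair Q (conformalFrame Q p).1 (conformalFrame Q p).2 := by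
  obtain ⟨u, v⟩ := p
  have hdet := h.gramDet_pos hQ
  have hsq : Q (√(gramDet Q u v) • u) (√(gramDet Q u v) • u) = gramDet Q u v * Q u u := by
    simp only [map_smul, LinearMap.smul_apply, smul_eq_mul, ← mul_assoc, Real.mul_self_sqrt hdet.le]
  refine ⟨hsq.trans ?_, ?_, ?_⟩
  · simp only [conformalFrame, map_sub, map_smul, LinearMap.sub_apply, LinearMap.smul_apply,
      smul_eq_mul, hQ.eq v u, gramDet]
    ring
  · simp only [conformalFrame, map_sub, map_smul, LinearMap.smul_apply, smul_eq_mul]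
    ring
  · exact hsq ▸ mul_pos hdet (h.apply_self_pos 0)

lemma IsConformalPair.conformalFrame_eq {u v : E} (h : IsConformalPair Q u v) :
    conformalFrame Q (u, v) = Q u u • (u, v) := by
  have hdet : √(gramDet Q u v) = Q u u := by
    rw [gramDet, ← h.apply_self_eq, h.apply_eq_zero, zero_pow two_ne_zero, sub_zero,
      Real.sqrt_mul_self h.apply_self_pos.le]
  simp only [conformalFrame, hdet, h.apply_eq_zero, zero_smul, sub_zero, Prod.smul_mk]

lemma continuous_conformalFrame [TopologicalSpace E] [IsTopologicalAddGroup E]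
    [ContinuousSMul ℝ E] (hQ : Continuous fun p : E × E => Q p.1 p.2) :
    Continuous (conformalFrame Q) := by
  have h₁₁ : Continuous fun p : E × E => Q p.1 p.1 :=
    hQ.comp (continuous_fst.prodMk continuous_fst)
  have h₂₂ : Continuous fun p : E × E => Q p.2 p.2 :=
    hQ.comp (continuous_snd.prodMk continuous_snd)
  have hdet : Continuous fun p : E × E => gramDet Q p.1 p.2 := (h₁₁.mul h₂₂).sub (hQ.pow 2)
  exact (hdet.sqrt.smul continuous_fst).prodMk
    ((h₁₁.smul continuous_snd).sub (hQ.smul continuous_fst))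

end ConformalPair

section PeriodForm

variable {b : ℕ}

/-- The symmetric bilinear form of signature `(3, b - 3)`, i.e. `bR` bundled as a bilinear form. -/
def periodForm (b : ℕ) : LinearMap.BilinForm ℝ (Fin b → ℝ) :=
  Matrix.toBilin' (Matrix.diagonal eps)

lemma periodForm_apply (v w : Fin b → ℝ) : periodForm b v w = bR v w := by
  simp only [periodForm, Matrix.toBilin'_apply', Matrix.mulVec_diagonal, dotProduct, bR]
  exact Finset.sum_congr rfl fun i _ => by ring

lemma isSymm_periodForm : (periodForm b).IsSymm :=
  Matrix.isSymm_toBilin'_iff_isSymm.2 (Matrix.isSymm_diagonal _)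

lemma separatingLeft_periodForm : (periodForm b).SeparatingLeft := by
  have hdet : (Matrix.diagonal (eps (b := b))).det ≠ 0 := by
    rw [Matrix.det_diagonal, Finset.prod_ne_zero_iff]
    intro i _
    unfold eps
    split_ifs <;> norm_num
  exact (LinearMap.BilinForm.nondegenerate_toBilin'_of_det_ne_zero' _ hdet).1

lemma continuous_periodForm :
    Continuous fun p : (Fin b → ℝ) × (Fin b → ℝ) => periodForm b p.1 p.2 := by
  simp only [periodForm_apply, bR]
  fun_prop

lemma isPositiveFamily_single_castLE (hb : 3 ≤ b) :
    IsPositiveFamily (periodForm b) fun i : Fin 3 => Pi.single (Fin.castLE hb i) 1 := by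
  intro c hc
  obtain ⟨j, hj⟩ := Function.ne_iff.1 hc
  have hgram (i k : Fin 3) : periodForm b (Pi.single (Fin.castLE hb i) 1)
      (Pi.single (Fin.castLE hb k) 1) = if i = k then 1 else 0 := by
    simp [periodForm, Matrix.diagonal_apply, eps]
  have hsq : periodForm b (∑ i, c i • Pi.single (Fin.castLE hb i) 1)
      (∑ i, c i • Pi.single (Fin.castLE hb i) 1) = ∑ i, c i * c i := by
    simp [map_sum, LinearMap.sum_apply, hgram]
  rw [hsq]
  exact Finset.sum_pos' (fun i _ => mul_self_nonneg _) ⟨j, Finset.mem_univ _, mul_self_pos.2 hj⟩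

lemma isPeriodVec_iff_isConformalPair {z : Fin b → ℂ} :
    isPeriodVec z ↔ IsConformalPair (periodForm b) (rePart z) (imPart z) := by
  have hre : (qC z).re = qR (rePart z) - qR (imPart z) := by
    simp [qC, bC, qR, bR, rePart, imPart, Finset.sum_sub_distrib]
  have him : (qC z).im = 2 * bR (rePart z) (imPart z) := by
    simp only [qC, bC, bR, rePart, imPart, Complex.im_sum, Finset.mul_sum]
    refine Finset.sum_congr rfl fun i _ => ?_
    simp only [Complex.mul_im, Complex.mul_re, Complex.ofReal_re, Complex.ofReal_im, zero_mul,
      sub_zero, add_zero]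
    ring
  have hconj : (bC z (conjVec z)).re = qR (rePart z) + qR (imPart z) := by
    simp [bC, conjVec, qR, bR, rePart, imPart, Finset.sum_add_distrib]
  rw [isPeriodVec, Complex.ext_iff, hre, him, hconj, Complex.zero_re, Complex.zero_im]
  constructor
  · rintro ⟨⟨h₁, h₂⟩, h₃⟩
    constructor <;> simp only [periodForm_apply] <;> unfold qR at * <;> linarith
  · rintro ⟨h₁, h₂, h₃⟩
    simp only [periodForm_apply] at h₁ h₂ h₃
    unfold qR
    exact ⟨⟨by linarith, by linarith⟩, by linarith⟩

end PeriodForm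

section PositivePair

variable {b : ℕ}

lemma isPeriodVec.smul {z : Fin b → ℂ} (h : isPeriodVec z) {a : ℂ} (ha : a ≠ 0) :
    isPeriodVec (a • z) := by
  have hq : qC (a • z) = a ^ 2 * qC z := by
    simp only [qC, bC, Finset.mul_sum, Pi.smul_apply, smul_eq_mul]
    exact Finset.sum_congr rfl fun i _ => by ring
  have hconj : bC (a • z) (conjVec (a • z)) = (Complex.normSq a : ℂ) * bC z (conjVec z) := by
    simp only [bC, conjVec, Finset.mul_sum, Pi.smul_apply, smul_eq_mul, map_mul,
      ← Complex.mul_conj]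
    exact Finset.sum_congr rfl fun i _ => by ring
  refine ⟨by rw [hq, h.1, mul_zero], ?_⟩
  rw [hconj, Complex.re_ofReal_mul]
  exact mul_pos (Complex.normSq_pos.2 ha) h.2

lemma isPeriodVec.ne_zero {z : Fin b → ℂ} (h : isPeriodVec z) : z ≠ 0 := by
  rintro rfl
  simpa [bC] using h.2

lemma mk_mem_periodDomain_iff {z : Fin b → ℂ} (hz : z ≠ 0) :
    Projectivization.mk ℂ z hz ∈ periodDomain b ↔ isPeriodVec z := by
  refine ⟨?_, fun h => ⟨z, hz, rfl, h⟩⟩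
  rintro ⟨w, hw, hwz, hper⟩
  obtain ⟨a, rfl⟩ := (Projectivization.mk_eq_mk_iff ℂ z w hz hw).1 hwz.symm
  exact hper.smul a.ne_zero

/-- The ordered bases of positive planes in `ℝ^b`, which parametrize the period domain. -/
abbrev PositivePair (b : ℕ) : Type :=
  {p : (Fin b → ℝ) × (Fin b → ℝ) // IsPositiveFamily (periodForm b) ![p.1, p.2]}

namespace PositivePair

/-- The period vector `u + i v` of the conformal frame `(u, v)` of a positive pair. -/
def periodVec (p : PositivePair b) : Fin b → ℂ :=
  cplx (conformalFrame (periodForm b) p.1).1 +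
    Complex.I • cplx (conformalFrame (periodForm b) p.1).2

lemma rePart_periodVec (p : PositivePair b) :
    rePart p.periodVec = (conformalFrame (periodForm b) p.1).1 := by
  ext i
  simp [rePart, periodVec, cplx]

lemma imPart_periodVec (p : PositivePair b) :
    imPart p.periodVec = (conformalFrame (periodForm b) p.1).2 := by
  ext i
  simp [imPart, periodVec, cplx]

lemma isPeriodVec_periodVec (p : PositivePair b) : isPeriodVec p.periodVec := by
  rw [isPeriodVec_iff_isConformalPair, rePart_periodVec, imPart_periodVec]
  exact p.2.isConformalPair_conformalFrame isSymm_periodForm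

lemma continuous_periodVec : Continuous (periodVec (b := b)) := by
  have hframe : Continuous fun p : PositivePair b => conformalFrame (periodForm b) p.1 :=
    (continuous_conformalFrame continuous_periodForm).comp continuous_subtype_val
  have hcplx : Continuous (cplx (b := b)) := by
    unfold cplx
    fun_prop
  exact (hcplx.comp hframe.fst).add ((hcplx.comp hframe.snd).const_smul Complex.I)

/-- The period point of the oriented plane spanned by a positive pair. -/
def point (p : PositivePair b) : Projectivization ℂ (Fin b → ℂ) :=
  Projectivization.mk ℂ p.periodVec p.isPeriodVec_periodVec.ne_zero

lemma point_mem_periodDomain (p : PositivePair b) : p.point ∈ periodDomain b :=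
  ⟨_, _, rfl, p.isPeriodVec_periodVec⟩

lemma point_mem_twistorLine {p : PositivePair b} {W : Submodule ℝ (Fin b → ℝ)}
    (hp : p.1 ∈ W.prod W) : p.point ∈ twistorLine W := by
  refine ⟨_, _, rfl, p.isPeriodVec_periodVec, ?_, ?_⟩
  · rw [rePart_periodVec]
    exact W.smul_mem _ hp.1
  · rw [imPart_periodVec]
    exact W.sub_mem (W.smul_mem _ hp.2) (W.smul_mem _ hp.1)

lemma continuous_point : Continuous (point (b := b)) :=
  continuous_projectivizationMk.comp 
    (continuous_periodVec.subtype_mk fun p => p.isPeriodVec_periodVec.ne_zero)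

/-- The real and imaginary parts of a period vector, which form a positive pair over its class. -/
def ofIsPeriodVec {z : Fin b → ℂ} (h : isPeriodVec z) : PositivePair b :=
  ⟨(rePart z, imPart z), (isPeriodVec_iff_isConformalPair.1 h).isPositiveFamily isSymm_periodForm⟩

lemma point_ofIsPeriodVec {z : Fin b → ℂ} (h : isPeriodVec z) :
    (ofIsPeriodVec h).point = Projectivization.mk ℂ z h.ne_zero := by
  refine (Projectivization.mk_eq_mk_iff' ..).2 ⟨periodForm b (rePart z) (rePart z), ?_⟩
  ext i
  simp only [periodVec, ofIsPeriodVec, (isPeriodVec_iff_isConformalPair.1 h).conformalFrame_eq]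
  apply Complex.ext <;> simp [cplx, rePart, imPart]

lemma nhdsWithin_periodDomain_le_map_point {z : Fin b → ℂ} (h : isPeriodVec z) :
    𝓝[periodDomain b] (Projectivization.mk ℂ z h.ne_zero) ≤
      Filter.map point (𝓝 (ofIsPeriodVec h)) := by
  intro S hS
  have hparts : Continuous fun w : Fin b → ℂ => (rePart w, imPart w) := by
    unfold rePart imPart
    fun_prop
  have hpairs : ∀ᶠ p in 𝓝 (rePart z, imPart z), ∀ q : PositivePair b, q.1 = p → q.point ∈ S := by
    change ∀ᶠ q in 𝓝 (ofIsPeriodVec h), q.point ∈ S at hS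
    rwa [nhds_subtype_eq_comap, Filter.eventually_comap] at hS
  have hvecs := ((hparts.comp continuous_subtype_val).tendsto
    (⟨z, h.ne_zero⟩ : {z : Fin b → ℂ // z ≠ 0})).eventually hpairs
  change ∀ᶠ y in 𝓝[periodDomain b] _, y ∈ S
  rw [eventually_nhdsWithin_iff]
  refine isOpenMap_projectivizationMk.nhds_le ⟨z, h.ne_zero⟩ (Filter.mem_map.2 ?_)
  filter_upwards [hvecs] with w hw hwD
  have hper := (mk_mem_periodDomain_iff w.2).1 hwD
  have hpoint := hw (ofIsPeriodVec hper) rfl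
  rwa [point_ofIsPeriodVec] at hpoint

end PositivePair

end PositivePair

section StrongEquivalence

variable {b : ℕ} {Λ : AddSubgroup (Fin b → ℝ)} {B : Set (Projectivization ℂ (Fin b → ℂ))}

lemma IsGenericW.mono {V W : Submodule ℝ (Fin b → ℝ)} (hV : IsGenericW Λ V) (hVW : V ≤ W) :
    IsGenericW Λ W :=
  fun α hα hαW => hV α hα fun v hv => hαW v (hVW hv)

lemma dense_setOf_isGenericW_span_singleton (hΛ : (Λ : Set (Fin b → ℝ)).Countable) :
    Dense {u | IsGenericW Λ (Submodule.span ℝ {u})} := by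
  have hcont (α : Fin b → ℝ) : Continuous (periodForm b α) :=
    LinearMap.continuous_of_finiteDimensional _
  refine (dense_setOf_forall_apply_eq_zero_imp hcont separatingLeft_periodForm hΛ).mono ?_
  intro u hu α hα hαu
  refine hu α hα ?_
  rw [periodForm_apply]
  exact hαu u (Submodule.mem_span_singleton_self u)

lemma exists_isGenericW_isPositiveFamily_vecCons (hb : 3 ≤ b)
    (hΛ : (Λ : Set (Fin b → ℝ)).Countable) {f : Fin 2 → Fin b → ℝ}
    (hf : IsPositiveFamily (periodForm b) f) (i : Fin 2) {N : Set (Fin b → ℝ)}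
    (hN : N ∈ 𝓝 (f i)) :
    ∃ w ∈ N, IsGenericW Λ (Submodule.span ℝ {w}) ∧
      IsPositiveFamily (periodForm b) (Matrix.vecCons w f) := by
  obtain ⟨c, hc, hfc⟩ := (isPositiveFamily_single_castLE hb).exists_pos_orthogonal f (by simp)
  have hclosure := hf.mem_closure_setOf_vecCons isSymm_periodForm
    (Submodule.subset_span ⟨i, rfl⟩) hc hfc
  have hopen : IsOpen {w | IsPositiveFamily (periodForm b) (Matrix.vecCons w f)} :=
    (isOpen_setOf_isPositiveFamily continuous_periodForm).preimage
      (continuous_id.matrixVecCons continuous_const)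
  have hdense := (dense_setOf_isGenericW_span_singleton hΛ).open_subset_closure_inter hopen
  obtain ⟨w, hwN, hwpos, hwgen⟩ :=
    mem_closure_iff_nhds.1 (closure_minimal hdense isClosed_closure hclosure) N hN
  exact ⟨w, hwN, hwgen, hwpos⟩

/-- The positive three-dimensional subspaces whose twistor line is generic with respect to `Λ`. -/
structure IsGenericThreeSpace (Λ : AddSubgroup (Fin b → ℝ)) (W : Submodule ℝ (Fin b → ℝ)) :
    Prop where
  finrank_eq : Module.finrank ℝ W = 3
  posDefOn : PosDefOn W
  isGenericW : IsGenericW Λ W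

lemma IsPositiveFamily.isGenericThreeSpace_span {f : Fin 3 → Fin b → ℝ}
    (hf : IsPositiveFamily (periodForm b) f) {i : Fin 3}
    (hi : IsGenericW Λ (Submodule.span ℝ {f i})) :
    IsGenericThreeSpace Λ (Submodule.span ℝ (Set.range f)) where
  finrank_eq := by simpa using finrank_span_eq_card hf.linearIndependent
  posDefOn := fun v hv hv0 => by
    rw [qR, ← periodForm_apply]
    exact hf.pos_of_mem_span hv hv0
  isGenericW := hi.mono (Submodule.span_mono (Set.singleton_subset_iff.2 ⟨i, rfl⟩))

/-- One link of a strong equivalence: `y` lies in the connected component of `x` in `T_W ∩ B` for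
some generic positive three-dimensional subspace `W`. -/
def TwistorStep (Λ : AddSubgroup (Fin b → ℝ)) (B : Set (Projectivization ℂ (Fin b → ℂ)))
    (x y : Projectivization ℂ (Fin b → ℂ)) : Prop :=
  ∃ W, IsGenericThreeSpace Λ W ∧ x ∈ twistorLine W ∩ B ∧
    y ∈ connectedComponentIn (twistorLine W ∩ B) x

/-- Strong equivalence of points of `B`: a nonempty chain of links. -/
def StronglyEquiv (Λ : AddSubgroup (Fin b → ℝ)) (B : Set (Projectivization ℂ (Fin b → ℂ))) :
    Projectivization ℂ (Fin b → ℂ) → Projectivization ℂ (Fin b → ℂ) → Prop :=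
  Relation.TransGen (TwistorStep Λ B)

lemma TwistorStep.right_mem {x y : Projectivization ℂ (Fin b → ℂ)} (h : TwistorStep Λ B x y) :
    y ∈ B := by
  obtain ⟨W, -, -, hy⟩ := h
  exact (connectedComponentIn_subset _ _ hy).2

instance : Std.Symm (TwistorStep Λ B) where
  symm := by
    rintro x y ⟨W, hW, hx, hy⟩
    refine ⟨W, hW, connectedComponentIn_subset _ _ hy, ?_⟩
    rw [← connectedComponentIn_eq hy]
    exact mem_connectedComponentIn hx

lemma StronglyEquiv.symm {x y : Projectivization ℂ (Fin b → ℂ)} (h : StronglyEquiv Λ B x y) :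
    StronglyEquiv Λ B y x :=
  Std.Symm.symm (r := Relation.TransGen (TwistorStep Λ B)) _ _ h

namespace PositivePair

lemma twistorStep_point_of_convex {K : Set ((Fin b → ℝ) × (Fin b → ℝ))} (hK : Convex ℝ K)
    (hKB : ∀ r ∈ K, ∃ hr, point (b := b) ⟨r, hr⟩ ∈ B) {W : Submodule ℝ (Fin b → ℝ)}
    (hW : IsGenericThreeSpace Λ W) {p q : PositivePair b} (hpK : p.1 ∈ K) (hqK : q.1 ∈ K)
    (hpW : p.1 ∈ W.prod W) (hqW : q.1 ∈ W.prod W) : TwistorStep Λ B p.point q.point := by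
  let S : Set (PositivePair b) := Subtype.val ⁻¹' (K ∩ (W.prod W : Set _))
  have hS : IsPreconnected S := by
    have hval : Subtype.val '' S = K ∩ (W.prod W : Set _) :=
      Set.image_preimage_eq_of_subset fun r hr => ⟨⟨r, (hKB r hr.1).1⟩, rfl⟩
    have hconvex := (hK.inter (W.prod W).convex).isPreconnected
    rw [← hval] at hconvex
    exact IsInducing.subtypeVal.isPreconnected_image.1 hconvex
  have himage : IsPreconnected (point '' S) := hS.image _ continuous_point.continuousOn
  have hsub : point '' S ⊆ twistorLine W ∩ B := by
    rintro _ ⟨r, hr, rfl⟩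
    exact ⟨point_mem_twistorLine hr.2, (hKB r.1 hr.1).2⟩
  have hp : p.point ∈ point '' S := ⟨p, ⟨hpK, hpW⟩, rfl⟩
  have hq : q.point ∈ point '' S := ⟨q, ⟨hqK, hqW⟩, rfl⟩
  exact ⟨W, hW, hsub hp, himage.subset_connectedComponentIn hp hsub hq⟩

lemma exists_convex_isOpen_forall_point_mem {p : PositivePair b}
    (hB : ∀ᶠ q in 𝓝 p, q.point ∈ B) :
    ∃ K : Set ((Fin b → ℝ) × (Fin b → ℝ)), Convex ℝ K ∧ IsOpen K ∧ p.1 ∈ K ∧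
      ∀ r ∈ K, ∃ hr, point (b := b) ⟨r, hr⟩ ∈ B := by
  have hopen : IsOpen {r : (Fin b → ℝ) × (Fin b → ℝ) |
      IsPositiveFamily (periodForm b) ![r.1, r.2]} :=
    (isOpen_setOf_isPositiveFamily continuous_periodForm).preimage (by fun_prop)
  have hev : ∀ᶠ r in 𝓝 p.1, ∃ hr, point (b := b) ⟨r, hr⟩ ∈ B := by
    rw [← hopen.isOpenEmbedding_subtypeVal.map_nhds_eq p, Filter.eventually_map]
    filter_upwards [hB] with q hq using ⟨q.2, hq⟩
  obtain ⟨ε, hε, hball⟩ := Metric.eventually_nhds_iff_ball.1 hev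
  exact ⟨_, convex_ball _ _, Metric.isOpen_ball, Metric.mem_ball_self hε, hball⟩

lemma twistorStep_point_of_isPositiveFamily {K : Set ((Fin b → ℝ) × (Fin b → ℝ))}
    (hK : Convex ℝ K) (hKB : ∀ r ∈ K, ∃ hr, point (b := b) ⟨r, hr⟩ ∈ B) {f : Fin 3 → Fin b → ℝ}
    (hf : IsPositiveFamily (periodForm b) f) (hgen : IsGenericW Λ (Submodule.span ℝ {f 0}))
    {p q : PositivePair b} (hpK : p.1 ∈ K) (hqK : q.1 ∈ K) {i j k l : Fin 3}
    (hp : p.1 = (f i, f j)) (hq : q.1 = (f k, f l)) : TwistorStep Λ B p.point q.point := by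
  have hmem (m : Fin 3) : f m ∈ Submodule.span ℝ (Set.range f) := Submodule.subset_span ⟨m, rfl⟩
  exact twistorStep_point_of_convex hK hKB (hf.isGenericThreeSpace_span hgen) hpK hqK
    (hp ▸ ⟨hmem i, hmem j⟩) (hq ▸ ⟨hmem k, hmem l⟩)

lemma eventually_stronglyEquiv_point (hb : 3 ≤ b) (hΛ : (Λ : Set (Fin b → ℝ)).Countable)
    {p : PositivePair b} (hB : ∀ᶠ q in 𝓝 p, q.point ∈ B) :
    ∀ᶠ q in 𝓝 p, StronglyEquiv Λ B p.point q.point := by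
  obtain ⟨K, hK, hKo, hpK, hKB⟩ := exists_convex_isOpen_forall_point_mem hB
  obtain ⟨⟨u, v⟩, huv⟩ := p
  have hfst : {r | (u, r) ∈ K} ∈ 𝓝 v := (hKo.preimage (by fun_prop)).mem_nhds hpK
  have hsnd : {r | (r, v) ∈ K} ∈ 𝓝 u := (hKo.preimage (by fun_prop)).mem_nhds hpK
  obtain ⟨w, hwK, hwgen, hwpos⟩ := exists_isGenericW_isPositiveFamily_vecCons hb hΛ huv 1 hfst
  obtain ⟨t, htK, htgen, htpos⟩ := exists_isGenericW_isPositiveFamily_vecCons hb hΛ huv 0 hsnd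
  have hpos := isOpen_setOf_isPositiveFamily (ι := Fin 3) (continuous_periodForm (b := b))
  filter_upwards [
    (hKo.preimage continuous_subtype_val).mem_nhds hpK,
    (hKo.preimage (f := fun q : PositivePair b => (u, q.1.2)) (by fun_prop)).mem_nhds hpK,
    (hKo.preimage (f := fun q : PositivePair b => (t, q.1.2)) (by fun_prop)).mem_nhds htK,
    (hpos.preimage (f := fun q : PositivePair b => ![w, u, q.1.2]) (by fun_prop)).mem_nhds hwpos,
    (hpos.preimage (f := fun q : PositivePair b => ![t, u, q.1.2]) (by fun_prop)).mem_nhds htpos,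
    (hpos.preimage (f := fun q : PositivePair b => ![t, q.1.1, q.1.2]) (by fun_prop)).mem_nhds
      htpos] with ⟨⟨u', v'⟩, hu'v'⟩ hqK huK htK' hwpos' htpos' htpos''
  obtain ⟨huw, -⟩ := hKB _ hwK
  obtain ⟨huv', -⟩ := hKB _ huK
  obtain ⟨htv', -⟩ := hKB _ htK'
  have huv_uw : TwistorStep Λ B (point ⟨(u, v), huv⟩) (point ⟨(u, w), huw⟩) :=
    twistorStep_point_of_isPositiveFamily hK hKB hwpos hwgen hpK hwK
      (i := 1) (j := 2) (k := 1) (l := 0) rfl rfl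
  have huw_uv' : TwistorStep Λ B (point ⟨(u, w), huw⟩) (point ⟨(u, v'), huv'⟩) :=
    twistorStep_point_of_isPositiveFamily hK hKB hwpos' hwgen hwK huK
      (i := 1) (j := 0) (k := 1) (l := 2) rfl rfl
  have huv'_tv' : TwistorStep Λ B (point ⟨(u, v'), huv'⟩) (point ⟨(t, v'), htv'⟩) :=
    twistorStep_point_of_isPositiveFamily hK hKB htpos' htgen huK htK'
      (i := 1) (j := 2) (k := 0) (l := 2) rfl rfl
  have htv'_u'v' : TwistorStep Λ B (point ⟨(t, v'), htv'⟩) (point ⟨(u', v'), hu'v'⟩) :=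
    twistorStep_point_of_isPositiveFamily hK hKB htpos'' htgen htK' hqK
      (i := 0) (j := 2) (k := 1) (l := 2) rfl rfl
  exact .tail (.tail (.tail (.single huv_uw) huw_uv') huv'_tv') htv'_u'v'

end PositivePair

lemma eventually_stronglyEquiv (hb : 3 ≤ b) (hΛ : (Λ : Set (Fin b → ℝ)).Countable)
    {x : Projectivization ℂ (Fin b → ℂ)} (hx : x ∈ periodDomain b)
    (hB : B ∈ 𝓝[periodDomain b] x) : ∀ᶠ y in 𝓝[periodDomain b] x, StronglyEquiv Λ B x y := by
  obtain ⟨z, hz, rfl, hper⟩ := hx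
  have hpoint := PositivePair.point_ofIsPeriodVec hper
  have htendsto : Filter.Tendsto PositivePair.point (𝓝 (PositivePair.ofIsPeriodVec hper))
      (𝓝[periodDomain b] Projectivization.mk ℂ z hz) := by
    rw [← hpoint]
    exact tendsto_nhdsWithin_of_tendsto_nhds_of_eventually_within _
      PositivePair.continuous_point.continuousAt (.of_forall PositivePair.point_mem_periodDomain)
  refine PositivePair.nhdsWithin_periodDomain_le_map_point hper (Filter.mem_map.2 ?_)
  filter_upwards [PositivePair.eventually_stronglyEquiv_point hb hΛ (htendsto.eventually_mem hB)]
    with q hq using hpoint ▸ hq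

end StrongEquivalence

/-- any two points of a connected open subset `B` of the period domain are
strongly equivalent as points of `B`: they are connected by a chain of generic twistor
lines, with consecutive points in the same connected component of `T_{W_i} ∩ B`. -/
theorem stmt10 (b : ℕ) (hb : 3 ≤ b) (Λ : AddSubgroup (Fin b → ℝ))
    (hΛ : (Λ : Set (Fin b → ℝ)).Countable)
    (B : Set (Projectivization ℂ (Fin b → ℂ))) (hBD : B ⊆ periodDomain b)
    (hBopen : ∃ U, IsOpen U ∧ B = U ∩ periodDomain b)
    (hBconn : IsConnected B)
    (x y : Projectivization ℂ (Fin b → ℂ)) (hx : x ∈ B) (hy : y ∈ B) :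
    ∃ k : ℕ, 1 ≤ k ∧ ∃ (W : Fin k → Submodule ℝ (Fin b → ℝ))
      (c : Fin (k + 1) → Projectivization ℂ (Fin b → ℂ)),
      (∀ i, Module.finrank ℝ ↥(W i) = 3 ∧ PosDefOn (W i) ∧ IsGenericW Λ (W i)) ∧
      (∀ j, c j ∈ B) ∧ c 0 = x ∧ c (Fin.last k) = y ∧
      ∀ i : Fin k, c i.castSucc ∈ twistorLine (W i) ∩ B ∧
        c i.succ ∈ connectedComponentIn (twistorLine (W i) ∩ B) (c i.castSucc) := by
  obtain ⟨U, hU, hBU⟩ := hBopen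
  have hnhds (z) (hz : z ∈ B) : B ∈ 𝓝[periodDomain b] z :=
    mem_nhdsWithin.2 ⟨U, hU, (hBU ▸ hz).1, hBU.ge⟩
  have hlocal (z) (hz : z ∈ B) : ∀ᶠ w in 𝓝[B] z, StronglyEquiv Λ B z w :=
    nhdsWithin_mono z hBD (eventually_stronglyEquiv hb hΛ (hBD hz) (hnhds z hz))
  have hxy : StronglyEquiv Λ B x y :=
    hBconn.isPreconnected.induction₂ (StronglyEquiv Λ B) hlocal
      (fun _ _ _ _ _ _ => Relation.TransGen.trans) (fun _ _ _ _ => StronglyEquiv.symm) hx hy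
  obtain ⟨s, hlength, hhead, hlast⟩ := exists_relSeries_of_transGen hxy
  choose W hW hleft hright using s.step
  have hmem (j) : s j ∈ B :=
    Fin.cases (show s.head ∈ B by rwa [hhead]) (fun i => TwistorStep.right_mem (s.step i)) j
  exact ⟨s.length, hlength, W, s,
    fun i => ⟨(hW i).finrank_eq, (hW i).posDefOn, (hW i).isGenericW⟩,
    hmem, hhead, hlast, fun i => ⟨hleft i, hright i⟩⟩
end
end
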